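/- arXiv:1609.03122 — 2 statements merged into one kernel-verified Lean document; each statement's English description precedes it below -/
import Mathlib

section
/- Let Γ₁ = ℤ[i] and Γ₂ = ⟨u, v⟩_ℤ for ℝ-linearly independent u, v ∈ ℤ[i]. If Im(u·conj(v)) divides each of Re(u²), Re(v²), and Re(uv), but divides none of N(u), N(v), and Re(u·conj(v)), then the point group of the color group H of the coloring of Γ₁ determined by Γ₂ is the group of order 4 consisting of the identity, the 180°-rotation z ↦ −z, the diagonal reflection z ↦ i·conj(z), and the diagonal reflection z ↦ −i·conj(z) (so the color group is of type cmm). -/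
open Complex

/-- A symmetry `h` of the plane (identified with `ℂ`) is a *color symmetry* of the
coloring of `Γ₁` determined by its subgroup `Γ₂` (each coset of `Γ₂` is one color) if
there is a permutation `σ` of the colors with `c (h ℓ) = σ (c ℓ)` for all `ℓ ∈ Γ₁`. -/
def IsColorSymmetry (Γ₁ Γ₂ : AddSubgroup ℂ) (h : ℂ → ℂ) : Prop :=
  ∃ σ : Equiv.Perm (ℂ ⧸ Γ₂), ∀ ℓ ∈ Γ₁,
    (QuotientAddGroup.mk (h ℓ) : ℂ ⧸ Γ₂) = σ (QuotientAddGroup.mk ℓ)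

/-- The point group `P(H)` of the color group `H` of the coloring of `Γ₁` determined by
`Γ₂`: all isometries of the plane fixing the origin, mapping `Γ₁` onto itself, and
permuting the colors. -/
def pointColorGroup (Γ₁ Γ₂ : AddSubgroup ℂ) : Set (ℂ → ℂ) :=
  {g | Isometry g ∧ Function.Surjective g ∧ g 0 = 0 ∧
    g '' (Γ₁ : Set ℂ) = Γ₁ ∧ IsColorSymmetry Γ₁ Γ₂ g}

lemma aux_memG1 (z : ℂ) : z ∈ AddSubgroup.closure ({1, I} : Set ℂ) ↔ ∃ a b : ℤ, z = a + b * I := by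
  rw [AddSubgroup.mem_closure_pair]
  simp only [zsmul_eq_mul, mul_one]
  exact ⟨fun ⟨a, b, h⟩ => ⟨a, b, h.symm⟩, fun ⟨a, b, h⟩ => ⟨a, b, h.symm⟩⟩

lemma aux_isom (g : ℂ → ℂ) (hg : Isometry g) (hs : Function.Surjective g) (h0 : g 0 = 0) :
    ∃ a : ℂ, ‖a‖ = 1 ∧ ((∀ z, g z = a * z) ∨ (∀ z, g z = a * starRingEnd ℂ z)) := by
  let e : ℂ ≃ᵢ ℂ := IsometryEquiv.mk (Equiv.ofBijective g ⟨hg.injective, hs⟩) hg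
  let f : ℂ ≃ₗᵢ[ℝ] ℂ := IsometryEquiv.toRealLinearIsometryEquivOfMapZero e h0
  have hf : ∀ z, f z = g z := fun z => rfl
  obtain ⟨a, ha⟩ := linear_isometry_complex f
  refine ⟨a, Circle.norm_coe a, ?_⟩
  rcases ha with ha | ha
  · left
    intro z
    rw [← hf, ha]; simp
  · right
    intro z
    rw [← hf, ha]; simp

lemma aux_unit (a b : ℤ) (h : a * a + b * b = 1) :
    (a = 1 ∧ b = 0) ∨ (a = -1 ∧ b = 0) ∨ (a = 0 ∧ b = 1) ∨ (a = 0 ∧ b = -1) := by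
  have h1 : a ≤ 1 := by nlinarith
  have h2 : -1 ≤ a := by nlinarith
  have h3 : b ≤ 1 := by nlinarith
  have h4 : -1 ≤ b := by nlinarith
  interval_cases a <;> interval_cases b <;> simp_all

/-- Case (d) for the square lattice `Γ₁ = ℤ[i]`: if `Im(u·conj v)` divides all of
`Re(u²)`, `Re(v²)`, `Re(uv)` but none of `N(u)`, `N(v)`, `Re(u·conj v)`, then the point
group of the color group of the coloring of `Γ₁` determined by `Γ₂ = ⟨u, v⟩_ℤ` consists
of the identity, the `180°`-rotation, and the diagonal reflections `z ↦ i·conj z` and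
`z ↦ -i·conj z` (type `cmm`). -/
theorem pointColorGroup_cmm (u v : ℂ) (u₁ u₂ v₁ v₂ : ℤ)
    (hu : u = u₁ + u₂ * I) (hv : v = v₁ + v₂ * I)
    (hind : LinearIndependent ℝ ![u, v])
    (Γ₁ Γ₂ : AddSubgroup ℂ)
    (hΓ₁ : Γ₁ = AddSubgroup.closure ({1, I} : Set ℂ))
    (hΓ₂ : Γ₂ = AddSubgroup.closure ({u, v} : Set ℂ))
    (ruv iuv nu nv ru2 iu2 rv2 iv2 rmuv imuv : ℤ)
    (hruv : u * starRingEnd ℂ v = ruv + iuv * I)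
    (hnu : u * starRingEnd ℂ u = (nu : ℂ))
    (hnv : v * starRingEnd ℂ v = (nv : ℂ))
    (hu2 : u ^ 2 = ru2 + iu2 * I)
    (hv2 : v ^ 2 = rv2 + iv2 * I)
    (hmuv : u * v = rmuv + imuv * I)
    (hdvd : iuv ∣ ru2 ∧ iuv ∣ rv2 ∧ iuv ∣ rmuv)
    (hndvd : ¬ iuv ∣ nu ∧ ¬ iuv ∣ nv ∧ ¬ iuv ∣ ruv) :
    pointColorGroup Γ₁ Γ₂ =
      {fun z => z, fun z => -z, fun z => I * starRingEnd ℂ z,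
        fun z => -(I * starRingEnd ℂ z)} := by
  have mem2 : ∀ z : ℂ, z ∈ Γ₂ ↔ ∃ a b : ℤ, a * u + b * v = z := by
    intro z
    rw [hΓ₂, AddSubgroup.mem_closure_pair]
    simp only [zsmul_eq_mul]
  have mem1 : ∀ z : ℂ, z ∈ Γ₁ ↔ ∃ a b : ℤ, z = a + b * I := by
    intro z
    rw [hΓ₁, aux_memG1]
  have key : ∀ a b c d : ℤ, ((a : ℂ) + b * I = c + d * I) → a = c ∧ b = d := by
    intro a b c d h
    have h1 := congrArg Complex.re h
    have h2 := congrArg Complex.im h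
    simp at h1 h2
    exact ⟨by exact_mod_cast h1, by exact_mod_cast h2⟩
  have cu : starRingEnd ℂ u = u₁ - u₂ * I := by rw [hu]; simp [sub_eq_add_neg]
  have cv : starRingEnd ℂ v = v₁ - v₂ * I := by rw [hv]; simp [sub_eq_add_neg]
  have I2 : I * I = -1 := I_mul_I
  obtain ⟨e1, e2⟩ := key (u₁ * v₁ + u₂ * v₂) (u₂ * v₁ - u₁ * v₂) ruv iuv (by
    rw [← hruv, cv, hu]; push_cast; linear_combination (u₂ * v₂ : ℂ) * I2)
  obtain ⟨e3, -⟩ := key (u₁ * u₁ - u₂ * u₂) (2 * u₁ * u₂) ru2 iu2 (by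
    rw [← hu2, hu]; push_cast; linear_combination (-u₂ * u₂ : ℂ) * I2)
  obtain ⟨e4, -⟩ := key (v₁ * v₁ - v₂ * v₂) (2 * v₁ * v₂) rv2 iv2 (by
    rw [← hv2, hv]; push_cast; linear_combination (-v₂ * v₂ : ℂ) * I2)
  obtain ⟨e5, -⟩ := key (u₁ * v₁ - u₂ * v₂) (u₁ * v₂ + u₂ * v₁) rmuv imuv (by
    rw [← hmuv, hu, hv]; push_cast; linear_combination (-u₂ * v₂ : ℂ) * I2)
  have hD : iuv ≠ 0 := by
    intro h0
    rw [LinearIndependent.pair_iff] at hind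
    have hz : (u₂ * v₁ - u₁ * v₂ : ℂ) = 0 := by exact_mod_cast e2.trans h0
    have a1 := hind v₁ (-u₁) (by
      rw [hu, hv]; simp only [real_smul]; push_cast; linear_combination I * hz)
    have a2 := hind v₂ (-u₂) (by
      rw [hu, hv]; simp only [real_smul]; push_cast; linear_combination -hz)
    have b1 : u₁ = 0 := by have := a1.2; simpa using this
    have b2 : u₂ = 0 := by have := a2.2; simpa using this
    have := hind 1 0 (by rw [hu, b1, b2]; simp)
    simp at this
  have hDc : (iuv : ℂ) ≠ 0 := by exact_mod_cast hD
  obtain ⟨⟨l, hl⟩, ⟨m, hm⟩, ⟨k, hk⟩⟩ := hdvd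
  have e2c : (u₂ * v₁ - u₁ * v₂ : ℂ) = iuv := by exact_mod_cast e2
  have hlc : (u₁ * u₁ - u₂ * u₂ : ℂ) = iuv * l := by exact_mod_cast e3.trans hl
  have hmc : (v₁ * v₁ - v₂ * v₂ : ℂ) = iuv * m := by exact_mod_cast e4.trans hm
  have hkc : (u₁ * v₁ - u₂ * v₂ : ℂ) = iuv * k := by exact_mod_cast e5.trans hk
  have su : I * starRingEnd ℂ u = k * u - l * v := by
    apply mul_left_cancel₀ hDc
    have : (iuv : ℂ) * (k * u - l * v) = (iuv * k) * u - (iuv * l) * v := by ring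
    rw [this, ← hkc, ← hlc, ← e2c, cu, hu, hv]
    linear_combination (-u₂ * (u₂ * v₁ - u₁ * v₂) : ℂ) * I2
  have sv : I * starRingEnd ℂ v = m * u - k * v := by
    apply mul_left_cancel₀ hDc
    have : (iuv : ℂ) * (m * u - k * v) = (iuv * m) * u - (iuv * k) * v := by ring
    rw [this, ← hkc, ← hmc, ← e2c, cv, hu, hv]
    linear_combination (-v₂ * (u₂ * v₁ - u₁ * v₂) : ℂ) * I2
  have swap : ∀ z ∈ Γ₂, I * starRingEnd ℂ z ∈ Γ₂ := by
    intro z hz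
    obtain ⟨a, b, rfl⟩ := (mem2 z).1 hz
    refine (mem2 _).2 ⟨a * k + b * m, -(a * l) - b * k, ?_⟩
    simp only [map_add, map_mul, map_intCast]
    push_cast
    linear_combination (-a : ℂ) * su - b * sv
  have uG : u ∈ Γ₂ := (mem2 u).2 ⟨1, 0, by simp⟩
  have vG : v ∈ Γ₂ := (mem2 v).2 ⟨0, 1, by simp⟩
  have norot : I * u ∉ Γ₂ := by
    intro h
    obtain ⟨a, b, h⟩ := (mem2 _).1 h
    obtain ⟨f1, f2⟩ := key (a * u₁ + b * v₁) (a * u₂ + b * v₂) (-u₂) u₁ (by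
      rw [hu, hv] at h; push_cast; linear_combination h + (u₂ : ℂ) * I2)
    apply hndvd.2.2
    refine ⟨a, ?_⟩
    rw [← e1, ← e2]
    linear_combination (-v₁) * f2 + v₂ * f1
  have sub12 : ∀ z ∈ Γ₂, z ∈ Γ₁ := by
    intro z hz
    obtain ⟨a, b, rfl⟩ := (mem2 z).1 hz
    refine (mem1 _).2 ⟨a * u₁ + b * v₁, a * u₂ + b * v₂, ?_⟩
    rw [hu, hv]; push_cast; ring
  have ss : ∀ z : ℂ, I * starRingEnd ℂ (I * starRingEnd ℂ z) = z := by
    intro z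
    simp only [map_mul, conj_I, conj_conj]
    linear_combination (-z) * I2
  have swap1 : ∀ z ∈ Γ₁, I * starRingEnd ℂ z ∈ Γ₁ := by
    intro z hz
    obtain ⟨a, b, rfl⟩ := (mem1 z).1 hz
    refine (mem1 _).2 ⟨b, a, ?_⟩
    simp only [map_add, map_mul, map_intCast, conj_I]
    linear_combination (-b : ℂ) * I2
  -- general construction
  have build : ∀ g : ℂ → ℂ, (∀ x y, g (x - y) = g x - g y) → (∀ z, ‖g z‖ = ‖z‖) →
      (∀ z, g (g z) = z) → (∀ z ∈ Γ₁, g z ∈ Γ₁) → (∀ z ∈ Γ₂, g z ∈ Γ₂) →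
      g ∈ pointColorGroup Γ₁ Γ₂ := by
    intro g hsub hn hinv h1 h2
    refine ⟨Isometry.of_dist_eq fun x y => ?_, fun z => ⟨g z, hinv z⟩, ?_, ?_, ?_⟩
    · rw [dist_eq_norm, dist_eq_norm, ← hsub, hn]
    · simpa using hsub 0 0
    · ext z
      constructor
      · rintro ⟨w, hw, rfl⟩
        exact h1 w hw
      · intro hz
        exact ⟨g z, h1 z hz, hinv z⟩
    · let τ : ℂ ⧸ Γ₂ → ℂ ⧸ Γ₂ := Quotient.map' g (by
        intro x y hxy
        rw [QuotientAddGroup.leftRel_apply] at hxy ⊢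
        have := h2 _ hxy
        rwa [neg_add_eq_sub, hsub, ← neg_add_eq_sub] at this)
      have hτ : Function.Involutive τ := by
        intro x
        induction x using QuotientAddGroup.induction_on with
        | H z =>
          change (QuotientAddGroup.mk (g (g z)) : ℂ ⧸ Γ₂) = QuotientAddGroup.mk z
          rw [hinv]
      exact ⟨hτ.toPerm, fun ℓ _ => rfl⟩
  ext g
  simp only [Set.mem_insert_iff, Set.mem_singleton_iff]
  constructor
  · rintro ⟨hg, hs, h0, him, σ, hσ⟩
    have σ0 : σ (QuotientAddGroup.mk 0) = QuotientAddGroup.mk 0 := by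
      rw [← hσ 0 Γ₁.zero_mem, h0]
    have pres : ∀ z ∈ Γ₂, g z ∈ Γ₂ := by
      intro z hz
      have hz0 : (QuotientAddGroup.mk z : ℂ ⧸ Γ₂) = QuotientAddGroup.mk 0 :=
        (QuotientAddGroup.eq_zero_iff z).2 hz
      have := hσ z (sub12 z hz)
      rw [hz0, σ0] at this
      exact (QuotientAddGroup.eq_zero_iff _).1 this
    obtain ⟨a, ha, hform⟩ := aux_isom g hg hs h0
    have g1 : g 1 = a := by rcases hform with h | h <;> simp [h]
    have aG : a ∈ Γ₁ := by
      have : g 1 ∈ g '' (Γ₁ : Set ℂ) := ⟨1, (mem1 1).2 ⟨1, 0, by simp⟩, rfl⟩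
      rw [him, g1] at this
      exact this
    obtain ⟨p, q, hpq⟩ := (mem1 a).1 aG
    have hpq1 : p * p + q * q = 1 := by
      have h := Complex.normSq_eq_norm_sq a
      rw [ha, hpq, Complex.normSq_apply] at h
      simp at h
      exact_mod_cast h
    have hcases : a = 1 ∨ a = -1 ∨ a = I ∨ a = -I := by
      rcases aux_unit p q hpq1 with ⟨rfl, rfl⟩ | ⟨rfl, rfl⟩ | ⟨rfl, rfl⟩ | ⟨rfl, rfl⟩ <;>
        simp [hpq]
    rcases hform with h | h
    · rcases hcases with rfl | rfl | rfl | rfl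
      · left; funext z; simp [h]
      · right; left; funext z; simp [h]
      · exact absurd (h u ▸ pres u uG) norot
      · exfalso
        have := Γ₂.neg_mem (pres u uG)
        rw [h u] at this
        exact norot (by simpa using this)
    · rcases hcases with rfl | rfl | rfl | rfl
      · exfalso
        have := swap _ (pres u uG)
        rw [h u] at this
        exact norot (by simpa using this)
      · exfalso
        have := Γ₂.neg_mem (swap _ (pres u uG))
        rw [h u] at this
        exact norot (by simpa using this)
      · right; right; left; funext z; simp [h]
      · right; right; right; funext z; simp [h]
  · rintro (rfl | rfl | rfl | rfl)
    · exact build _ (fun _ _ => rfl) (fun _ => rfl) (fun _ => rfl) (fun _ h => h) (fun _ h => h)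
    · exact build _ (fun _ _ => by ring) (fun _ => norm_neg _) (fun _ => neg_neg _)
        (fun _ h => Γ₁.neg_mem h) (fun _ h => Γ₂.neg_mem h)
    · exact build _ (fun _ _ => by rw [map_sub]; ring) (fun _ => by simp) ss swap1 swap
    · exact build _ (fun _ _ => by rw [map_sub]; ring) (fun _ => by simp)
        (fun z => by rw [map_neg, mul_neg, neg_neg]; exact ss z)
        (fun z h => Γ₁.neg_mem (swap1 z h)) (fun z h => Γ₂.neg_mem (swap z h))
end

section
/- Let ξ = e^{2πi/3}, Γ₁ = ℤ[ξ] the hexagonal lattice, and Γ₂ = ⟨u, v⟩_ℤ for ℝ-linearly independent u, v ∈ ℤ[ξ]. If Im_h(u·conj(v)) divides each of Re_h(u²) − Im_h(u²), Re_h(v²) − Im_h(v²), and Re_h(uv) − Im_h(uv), but divides none of N(u), N(v), and Re_h(u·conj(v)), then the point group of the color group H of the coloring of Γ₁ determined by Γ₂ has order 4 and consists of the identity, the 180°-rotation z ↦ −z, and a pair {s, −s} of reflections from the point group of ℤ[ξ] (so the color group is of type cmm). -/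
open Complex

theorem xi_sq_aux (ξ : ℂ) (hξ : ξ = Complex.exp (2 * (Real.pi : ℂ) * I / 3)) :
    ξ.re = -1/2 ∧ ξ.im = Real.sqrt 3 / 2 := by
  have h : ξ = Complex.exp (((Real.pi - Real.pi/3 : ℝ) : ℂ) * I) := by
    rw [hξ]; congr 1; push_cast; ring
  rw [h, Complex.exp_ofReal_mul_I_re, Complex.exp_ofReal_mul_I_im, Real.cos_pi_sub,
    Real.sin_pi_sub, Real.cos_pi_div_three, Real.sin_pi_div_three]
  constructor <;> ring

theorem xi_coord_aux (ξ : ℂ) (h : ξ.im ≠ 0) (a b c d : ℤ)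
    (e : (a : ℂ) + b * ξ = c + d * ξ) : a = c ∧ b = d := by
  have him := congrArg Complex.im e
  simp at him
  have hb : b = d := by
    rcases him with h1 | h1
    · exact_mod_cast h1
    · exact absurd h1 h
  subst hb
  refine ⟨?_, rfl⟩
  have := add_right_cancel e
  exact_mod_cast this

theorem mem_pair_aux (x y z : ℂ) :
    z ∈ AddSubgroup.closure ({x, y} : Set ℂ) ↔ ∃ m n : ℤ, z = m * x + n * y := by
  rw [AddSubgroup.mem_closure_pair]
  constructor
  · rintro ⟨m, n, h⟩; exact ⟨m, n, by rw [← h]; simp⟩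
  · rintro ⟨m, n, h⟩; exact ⟨m, n, by rw [h]; simp⟩

theorem invol_mem_aux (Γ₁ Γ₂ : AddSubgroup ℂ) (g : ℂ → ℂ) (hadd : ∀ x y, g (x + y) = g x + g y)
    (hn : ∀ x, ‖g x‖ = ‖x‖) (hi : ∀ x, g (g x) = x)
    (h1 : ∀ x ∈ Γ₁, g x ∈ Γ₁) (h2 : ∀ x ∈ Γ₂, g x ∈ Γ₂) : g ∈ pointColorGroup Γ₁ Γ₂ := by
  let e : ℂ ≃+ ℂ := { toFun := g, invFun := g, left_inv := hi, right_inv := hi, map_add' := hadd }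
  refine ⟨?_, fun x => ⟨g x, hi x⟩, map_zero e, ?_, ?_⟩
  · exact AddMonoidHomClass.isometry_of_norm e hn
  · ext x
    constructor
    · rintro ⟨y, hy, rfl⟩; exact h1 y hy
    · intro hx; exact ⟨g x, h1 x hx, hi x⟩
  · have he : Γ₂.map (e : ℂ →+ ℂ) = Γ₂ := by
      ext x
      constructor
      · rintro ⟨y, hy, rfl⟩; exact h2 y hy
      · intro hx; exact ⟨g x, h2 x hx, hi x⟩
    exact ⟨(QuotientAddGroup.congr Γ₂ Γ₂ e he).toEquiv, fun ℓ _ => rfl⟩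

theorem pres_aux (Γ₁ Γ₂ : AddSubgroup ℂ) (hle : Γ₂ ≤ Γ₁) (g : ℂ → ℂ)
    (hg : g ∈ pointColorGroup Γ₁ Γ₂) (x : ℂ) (hx : x ∈ Γ₂) : g x ∈ Γ₂ := by
  obtain ⟨-, -, h0, -, σ, hσ⟩ := hg
  have e1 := hσ x (hle hx)
  have e2 := hσ 0 Γ₁.zero_mem
  rw [(QuotientAddGroup.eq_zero_iff x).2 hx] at e1
  rw [h0, QuotientAddGroup.mk_zero] at e2
  rw [← e2] at e1
  exact (QuotientAddGroup.eq_zero_iff _).1 e1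

theorem form_aux (g : ℂ → ℂ) (h : Isometry g) (hs : Function.Surjective g) (h0 : g 0 = 0) :
    (∀ z, g z = g 1 * z) ∨ (∀ z, g z = g 1 * starRingEnd ℂ z) := by
  let e : ℂ ≃ᵢ ℂ := ⟨Equiv.ofBijective g ⟨h.injective, hs⟩, h⟩
  let f : ℂ ≃ₗᵢ[ℝ] ℂ := e.toRealLinearIsometryEquivOfMapZero h0
  have hf : ∀ z, f z = g z := fun z => rfl
  obtain ⟨a, ha | ha⟩ := linear_isometry_complex f
  · left; intro z; rw [← hf, ← hf, ha]; simp
  · right; intro z; rw [← hf, ← hf, ha]; simp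

theorem unit_aux (m n : ℤ) (h : m ^ 2 - m * n + n ^ 2 = 1) :
    (m = 1 ∧ n = 0) ∨ (m = -1 ∧ n = 0) ∨ (m = 0 ∧ n = 1) ∨ (m = 0 ∧ n = -1) ∨
    (m = 1 ∧ n = 1) ∨ (m = -1 ∧ n = -1) := by
  have h1 : m ≤ 1 := by nlinarith [sq_nonneg (m - 2 * n)]
  have h2 : -1 ≤ m := by nlinarith [sq_nonneg (m - 2 * n)]
  have h3 : n ≤ 1 := by nlinarith [sq_nonneg (n - 2 * m)]
  have h4 : -1 ≤ n := by nlinarith [sq_nonneg (n - 2 * m)]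
  interval_cases m <;> interval_cases n <;> simp_all

/-- Case (e) for the hexagonal lattice `Γ₁ = ℤ[ξ]`, `ξ = e^{2πi/3}`: if
`Im_h(u·conj v)` divides all of `Re_h(u²) - Im_h(u²)`, `Re_h(v²) - Im_h(v²)`,
`Re_h(uv) - Im_h(uv)` but none of `N(u)`, `N(v)`, `Re_h(u·conj v)`, then the point
group of the color group of the coloring of `Γ₁` determined by `Γ₂ = ⟨u, v⟩_ℤ` has
order `4`, consisting of the identity, the `180°`-rotation, and a pair `{s, -s}` of
reflections from the point group of `ℤ[ξ]` (type `cmm`). -/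
theorem pointColorGroup_cmm_e (ξ ζ : ℂ)
    (hξ : ξ = Complex.exp (2 * (Real.pi : ℂ) * I / 3))
    (hζ : ζ = Complex.exp ((Real.pi : ℂ) * I / 3))
    (u v : ℂ) (a₁ a₂ b₁ b₂ : ℤ)
    (hu : u = a₁ + a₂ * ξ) (hv : v = b₁ + b₂ * ξ)
    (hind : LinearIndependent ℝ ![u, v])
    (Γ₁ Γ₂ : AddSubgroup ℂ)
    (hΓ₁ : Γ₁ = AddSubgroup.closure ({1, ξ} : Set ℂ))
    (hΓ₂ : Γ₂ = AddSubgroup.closure ({u, v} : Set ℂ))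
    (p₁ p₂ nu nv q₁ q₂ r₁ r₂ s₁ s₂ : ℤ)
    (hp : u * starRingEnd ℂ v = p₁ + p₂ * ξ)
    (hnu : u * starRingEnd ℂ u = (nu : ℂ))
    (hnv : v * starRingEnd ℂ v = (nv : ℂ))
    (hq : u ^ 2 = q₁ + q₂ * ξ)
    (hr : v ^ 2 = r₁ + r₂ * ξ)
    (hs : u * v = s₁ + s₂ * ξ)
    (hdvd : p₂ ∣ (q₁ - q₂) ∧ p₂ ∣ (r₁ - r₂) ∧ p₂ ∣ (s₁ - s₂))
    (hndvd : ¬ p₂ ∣ nu ∧ ¬ p₂ ∣ nv ∧ ¬ p₂ ∣ p₁) :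
    ∃ k : Fin 6, pointColorGroup Γ₁ Γ₂ =
      {fun z => z, fun z => -z, fun z => ζ ^ (k : ℕ) * starRingEnd ℂ z,
        fun z => -(ζ ^ (k : ℕ) * starRingEnd ℂ z)} := by
  obtain ⟨hre, him⟩ := xi_sq_aux ξ hξ
  have h3 : Real.sqrt 3 * Real.sqrt 3 = 3 := Real.mul_self_sqrt (by norm_num)
  have him0 : ξ.im ≠ 0 := by rw [him]; positivity
  have hx2 : ξ * ξ = -1 - ξ := by
    apply Complex.ext
    · simp [hre, him]; nlinarith
    · simp [hre, him]; ring
  have hxc : starRingEnd ℂ ξ = -1 - ξ := by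
    apply Complex.ext
    · simp [hre]; norm_num
    · simp
  have hz4 : ζ ^ 4 = -1 - ξ := by
    have h1 : ζ ^ 2 = ξ := by
      rw [hζ, hξ, ← Complex.exp_nat_mul]; congr 1; push_cast; ring
    calc ζ ^ 4 = ζ ^ 2 * ζ ^ 2 := by ring
      _ = _ := by rw [h1, hx2]
  have key := xi_coord_aux ξ him0
  have mem1 : ∀ z, z ∈ Γ₁ ↔ ∃ m n : ℤ, z = m + n * ξ := by
    intro z; rw [hΓ₁, mem_pair_aux]; simp
  have mem2 : ∀ z, z ∈ Γ₂ ↔ ∃ m n : ℤ, z = m * u + n * v := by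
    intro z; rw [hΓ₂, mem_pair_aux]
  have hle : Γ₂ ≤ Γ₁ := by
    intro z hz
    obtain ⟨m, n, rfl⟩ := (mem2 z).1 hz
    refine (mem1 _).2 ⟨m * a₁ + n * b₁, m * a₂ + n * b₂, ?_⟩
    rw [hu, hv]; push_cast; ring
  have uΓ : u ∈ Γ₂ := (mem2 _).2 ⟨1, 0, by simp⟩
  have vΓ : v ∈ Γ₂ := (mem2 _).2 ⟨0, 1, by simp⟩
  have hp2 : p₂ = a₂ * b₁ - a₁ * b₂ := by
    refine (key p₁ p₂ (a₁ * (b₁ - b₂) + a₂ * b₂) _ ?_).2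
    rw [← hp, hu, hv]; push_cast; simp only [map_add, map_mul, map_intCast, hxc]
    linear_combination (-(a₂ : ℂ) * b₂) * hx2
  have hq12 : q₁ - q₂ = a₁ ^ 2 - 2 * a₁ * a₂ := by
    have := key q₁ q₂ (a₁ ^ 2 - a₂ ^ 2) (2 * a₁ * a₂ - a₂ ^ 2) (by
      rw [← hq, hu]; push_cast; linear_combination ((a₂ : ℂ) ^ 2) * hx2)
    rw [this.1, this.2]; ring
  have hr12 : r₁ - r₂ = b₁ ^ 2 - 2 * b₁ * b₂ := by
    have := key r₁ r₂ (b₁ ^ 2 - b₂ ^ 2) (2 * b₁ * b₂ - b₂ ^ 2) (by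
      rw [← hr, hv]; push_cast; linear_combination ((b₂ : ℂ) ^ 2) * hx2)
    rw [this.1, this.2]; ring
  have hs12 : s₁ - s₂ = a₁ * b₁ - a₁ * b₂ - a₂ * b₁ := by
    have := key s₁ s₂ (a₁ * b₁ - a₂ * b₂) (a₁ * b₂ + a₂ * b₁ - a₂ * b₂) (by
      rw [← hs, hu, hv]; push_cast; linear_combination ((a₂ : ℂ) * b₂) * hx2)
    rw [this.1, this.2]; ring
  have hp0 : p₂ ≠ 0 := by
    intro h0
    rw [LinearIndependent.pair_iff] at hind
    have hC : (a₂ : ℂ) * b₁ - a₁ * b₂ = 0 := by exact_mod_cast (hp2.symm.trans h0)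
    have i1 := hind b₁ (-a₁) (by
      rw [hu, hv]; simp only [Complex.real_smul]; push_cast; linear_combination ξ * hC)
    have i2 := hind b₂ (-a₂) (by
      rw [hu, hv]; simp only [Complex.real_smul]; push_cast; linear_combination -hC)
    have ha1 : a₁ = 0 := by have := i1.2; simpa using this
    have ha2 : a₂ = 0 := by have := i2.2; simpa using this
    have i3 := hind 1 0 (by rw [hu, ha1, ha2]; simp)
    exact one_ne_zero i3.1
  have hpC : (p₂ : ℂ) ≠ 0 := by exact_mod_cast hp0
  -- the reflection preserves both lattices
  have ρ1 : ∀ z ∈ Γ₁, (-1 - ξ) * starRingEnd ℂ z ∈ Γ₁ := by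
    intro z hz
    obtain ⟨m, n, rfl⟩ := (mem1 z).1 hz
    refine (mem1 _).2 ⟨-m, n - m, ?_⟩
    simp only [map_add, map_mul, map_intCast, hxc]; push_cast
    linear_combination (n : ℂ) * hx2
  obtain ⟨⟨kq, hkq⟩, ⟨kr, hkr⟩, ⟨ks, hks⟩⟩ := hdvd
  rw [hq12] at hkq
  rw [hr12] at hkr
  rw [hs12] at hks
  have hkq' : (a₁ : ℂ) ^ 2 - 2 * a₁ * a₂ = p₂ * kq := by exact_mod_cast hkq
  have hkr' : (b₁ : ℂ) ^ 2 - 2 * b₁ * b₂ = p₂ * kr := by exact_mod_cast hkr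
  have hks' : (a₁ : ℂ) * b₁ - a₁ * b₂ - a₂ * b₁ = p₂ * ks := by exact_mod_cast hks
  have hp2' : (p₂ : ℂ) = a₂ * b₁ - a₁ * b₂ := by exact_mod_cast hp2
  have ρu : (-1 - ξ) * starRingEnd ℂ u = ((-ks : ℤ) : ℂ) * u + (kq : ℤ) * v := by
    apply mul_left_cancel₀ hpC
    rw [hu, hv]; simp only [map_add, map_mul, map_intCast, hxc]; push_cast
    linear_combination (-(b₁ : ℂ) - b₂ * ξ) * -hkq' + (a₁ + a₂ * ξ) * -hks' +
      (-(a₁ : ℂ) + (a₂ - a₁) * ξ) * hp2' + p₂ * a₂ * hx2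
  have ρv : (-1 - ξ) * starRingEnd ℂ v = ((-kr : ℤ) : ℂ) * u + (ks : ℤ) * v := by
    apply mul_left_cancel₀ hpC
    rw [hu, hv]; simp only [map_add, map_mul, map_intCast, hxc]; push_cast
    linear_combination (-(b₁ : ℂ) - b₂ * ξ) * -hks' + (a₁ + a₂ * ξ) * -hkr' +
      (-(b₁ : ℂ) + (b₂ - b₁) * ξ) * hp2' + p₂ * b₂ * hx2
  have ρ2 : ∀ z ∈ Γ₂, (-1 - ξ) * starRingEnd ℂ z ∈ Γ₂ := by
    intro z hz
    obtain ⟨m, n, rfl⟩ := (mem2 z).1 hz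
    refine (mem2 _).2 ⟨m * -ks + n * -kr, m * kq + n * ks, ?_⟩
    simp only [map_add, map_mul, map_intCast]
    push_cast at ρu ρv ⊢
    linear_combination (m : ℂ) * ρu + n * ρv
  have ρρ : ∀ z, (-1 - ξ) * starRingEnd ℂ ((-1 - ξ) * starRingEnd ℂ z) = z := by
    intro z
    simp only [map_sub, map_mul, map_neg, map_one, Complex.conj_conj, hxc]
    linear_combination (-z) * hx2
  have nξ : ‖(-1 - ξ)‖ = 1 := by
    have : Complex.normSq (-1 - ξ) = 1 := by
      rw [Complex.normSq_apply]; simp [hre, him]; nlinarith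
    rw [Complex.norm_def, this, Real.sqrt_one]
  -- no rotation of order three
  have norot : ξ * u ∉ Γ₂ := by
    intro h
    obtain ⟨m, n, h⟩ := (mem2 _).1 h
    have hp' : starRingEnd ℂ u * v = p₁ - p₂ - p₂ * ξ := by
      have := congrArg (starRingEnd ℂ) hp
      simp only [map_add, map_mul, map_intCast, Complex.conj_conj, hxc] at this
      rw [this]; ring
    have := key 0 nu (m * nu + n * (p₁ - p₂)) (-n * p₂) (by
      push_cast
      linear_combination (starRingEnd ℂ u) * h + (m - ξ) * hnu + n * hp')
    exact hndvd.1 ⟨-n, by rw [this.2]; ring⟩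
  have norot' : (1 + ξ) * u ∉ Γ₂ := by
    intro h
    apply norot
    have := Γ₂.sub_mem h uΓ
    convert this using 1; ring
  have negm : ∀ z, -z ∈ Γ₂ ↔ z ∈ Γ₂ := fun z => neg_mem_iff
  refine ⟨4, ?_⟩
  have h4 : ((4 : Fin 6) : ℕ) = 4 := rfl
  rw [h4, hz4]
  ext g
  simp only [Set.mem_insert_iff, Set.mem_singleton_iff]
  constructor
  · intro hg
    have pres := pres_aux Γ₁ Γ₂ hle g hg
    obtain ⟨giso, gsurj, g0, gΓ, -⟩ := hg
    have g1 : g 1 ∈ Γ₁ := by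
      have : g 1 ∈ g '' (Γ₁ : Set ℂ) := ⟨1, (mem1 1).2 ⟨1, 0, by simp⟩, rfl⟩
      rw [gΓ] at this; exact this
    obtain ⟨m, n, hmn⟩ := (mem1 _).1 g1
    have hN : m ^ 2 - m * n + n ^ 2 = 1 := by
      have hd := giso.dist_eq 1 0
      rw [g0, dist_zero_right, dist_zero_right, norm_one] at hd
      have hc := Complex.mul_conj (g 1)
      rw [Complex.normSq_eq_norm_sq, hd, hmn] at hc
      simp only [map_add, map_mul, map_intCast, hxc] at hc
      have : ((m : ℂ) ^ 2 - m * n + n ^ 2) = 1 := by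
        push_cast at hc
        linear_combination hc + (n : ℂ) ^ 2 * hx2
      exact_mod_cast this
    have pu := pres u uΓ
    rcases form_aux g giso gsurj g0 with hform | hform
    · rw [hform u, hmn] at pu
      have hg' : g = fun z => ((m : ℂ) + n * ξ) * z := by funext z; rw [hform z, hmn]
      rcases unit_aux m n hN with ⟨rfl, rfl⟩ | ⟨rfl, rfl⟩ | ⟨rfl, rfl⟩ | ⟨rfl, rfl⟩ |
        ⟨rfl, rfl⟩ | ⟨rfl, rfl⟩
      · left; rw [hg']; funext z; push_cast; ring
      · right; left; rw [hg']; funext z; push_cast; ring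
      · exact absurd (by convert pu using 1; push_cast; ring) norot
      · exact absurd ((negm _).1 (by convert pu using 1; push_cast; ring)) norot
      · exact absurd (by convert pu using 1; push_cast; ring) norot'
      · exact absurd ((negm _).1 (by convert pu using 1; push_cast; ring)) norot'
    · rw [hform u, hmn] at pu
      have pu' := ρ2 _ pu
      have hg' : g = fun z => ((m : ℂ) + n * ξ) * starRingEnd ℂ z := by
        funext z; rw [hform z, hmn]
      have pu2 : ((-m : ℂ) + (n - m) * ξ) * u ∈ Γ₂ := by
        convert pu' using 1
        simp only [map_add, map_mul, map_intCast, Complex.conj_conj, hxc]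
        linear_combination (-(n : ℂ) * u) * hx2
      rcases unit_aux m n hN with ⟨rfl, rfl⟩ | ⟨rfl, rfl⟩ | ⟨rfl, rfl⟩ | ⟨rfl, rfl⟩ |
        ⟨rfl, rfl⟩ | ⟨rfl, rfl⟩
      · exact absurd ((negm _).1 (by convert pu2 using 1; push_cast; ring)) norot'
      · exact absurd (by convert pu2 using 1; push_cast; ring) norot'
      · exact absurd (by convert pu2 using 1; push_cast; ring) norot
      · exact absurd ((negm _).1 (by convert pu2 using 1; push_cast; ring)) norot
      · right; right; right; rw [hg']; funext z; push_cast; ring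
      · right; right; left; rw [hg']; funext z; push_cast; ring
  · rintro (rfl | rfl | rfl | rfl)
    · exact invol_mem_aux _ _ _ (by simp) (by simp) (by simp) (by simp) (by simp)
    · exact invol_mem_aux _ _ _ (by intros; ring) (by simp) (by simp) (by simp) (by simp)
    · exact invol_mem_aux _ _ _ (by intros; simp only [map_add]; ring)
        (by intro x; rw [norm_mul, nξ, Complex.norm_conj, one_mul]) ρρ ρ1 ρ2
    · exact invol_mem_aux _ _ _ (by intros; simp only [map_add]; ring)
        (by intro x; rw [norm_neg, norm_mul, nξ, Complex.norm_conj, one_mul])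
        (by intro x; simp only [map_neg, mul_neg, neg_neg]; exact ρρ x)
        (fun x hx => Γ₁.neg_mem (ρ1 x hx)) (fun x hx => Γ₂.neg_mem (ρ2 x hx))
end
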